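/- arXiv:2101.12621 — 2 statements merged into one kernel-verified Lean document; each statement's English description precedes it below -/
import Mathlib

section
/- Let P be a finite pure weighted graded poset of rank d, let −1 ≤ k < l ≤ d, and let f, g ∈ C^l. Then ⟨f,g⟩ = Σ_{x∈P(k)} m(x)·⟨f_x, g_x⟩_x, where f_x, g_x are the localizations of f, g to the link P_x and ⟨·,·⟩_x is the inner product of the link. -/
open Finset

attribute [local instance] Classical.propDecidable

noncomputable section

/-- A finite pure weighted graded poset of rank `d`, presented as a rank function
and a weight scheme on a finite partial order `P`. -/
structure WGP (P : Type) [Fintype P] [PartialOrder P] where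
  /-- the rank of the poset -/
  d : ℤ
  /-- the rank function -/
  rk : P → ℤ
  rk_mono : Monotone rk
  rk_lb : ∀ x, -1 ≤ rk x
  rk_ub : ∀ x, rk x ≤ d
  rk_covBy : ∀ a b : P, a ⋖ b → rk b = rk a + 1
  bot_unique : ∃! x : P, rk x = -1
  isPure : ∀ x : P, ∃ y : P, rk y = d ∧ x ≤ y
  /-- the weight function -/
  m : P → ℝ
  m_pos : ∀ x, 0 < m x
  /-- the transition probabilities: `p y x` is `p_{y → x}` -/
  p : P → P → ℝ
  p_nonneg : ∀ y x, 0 ≤ p y x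
  p_pos_iff : ∀ y x, 0 < p y x ↔ x ⋖ y
  p_sum : ∀ y, 0 ≤ rk y → ∑ x ∈ univ.filter (fun x => x ⋖ y), p y x = 1
  m_eq : ∀ x, rk x < d → m x = ∑ y ∈ univ.filter (fun y => x ⋖ y), p y x * m y
  m_bot : ∀ x, rk x = -1 → m x = 1

/-- `T` has at most `n` eigenvalues greater than `c`, counted with
(geometric) multiplicity. -/
def eigMultAboveLe {V : Type*} [AddCommGroup V] [Module ℝ V]
    (T : Module.End ℝ V) (c : ℝ) (n : ℕ) : Prop :=
  ∀ s : Finset ℝ, (∀ μ ∈ s, c < μ) →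
    ∑ μ ∈ s, Module.finrank ℝ (T.eigenspace μ) ≤ n

/-- `μ` is the second largest eigenvalue of `T`, counted with multiplicity. -/
def IsSecondLargestEig {V : Type*} [AddCommGroup V] [Module ℝ V]
    (T : Module.End ℝ V) (μ : ℝ) : Prop :=
  T.HasEigenvalue μ ∧ eigMultAboveLe T μ 1 ∧
    ∃ s : Finset ℝ, (∀ ν ∈ s, μ ≤ ν) ∧
      2 ≤ ∑ ν ∈ s, Module.finrank ℝ (T.eigenspace ν)

/-- `ν` is the least eigenvalue of `T`. -/
def IsLeastEig {V : Type*} [AddCommGroup V] [Module ℝ V]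
    (T : Module.End ℝ V) (ν : ℝ) : Prop :=
  T.HasEigenvalue ν ∧ ∀ c : ℝ, T.HasEigenvalue c → ν ≤ c

/-- `λ(T) ≤ lam`, i.e. the second largest eigenvalue of `T` (with multiplicity)
is at most `lam` and the least eigenvalue is at least `-lam`. -/
def lamBd {V : Type*} [AddCommGroup V] [Module ℝ V]
    (T : Module.End ℝ V) (lam : ℝ) : Prop :=
  eigMultAboveLe T lam 1 ∧ ∀ c : ℝ, T.HasEigenvalue c → -lam ≤ c

namespace WGP

variable {P : Type} [Fintype P] [PartialOrder P] (W : WGP P)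

/-- The level set `P(i)`. -/
def lvl (i : ℤ) : Finset P := univ.filter (fun x => W.rk x = i)

/-- The weighted inner product on `C^i`. -/
def innerAt (i : ℤ) (f g : P → ℝ) : ℝ := ∑ x ∈ W.lvl i, W.m x * f x * g x

/-- The squared norm on `C^i`. -/
def normSqAt (i : ℤ) (f : P → ℝ) : ℝ := W.innerAt i f f

/-- The norm on `C^i`. -/
def normAt (i : ℤ) (f : P → ℝ) : ℝ := Real.sqrt (W.normSqAt i f)

/-- The matrix of transition probabilities : entry `(y, x)` is `p_{y→x}`,
which vanishes unless `x ⋖ y`.  This is also the matrix of the up operator. -/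
def upMat : Matrix P P ℝ := Matrix.of fun y x => W.p y x

/-- The matrix of the down operator. -/
def downMat : Matrix P P ℝ := Matrix.of fun x y => W.p y x * W.m y / W.m x

/-- The up operator `U`. -/
def Up (f : P → ℝ) : P → ℝ := W.upMat.mulVec f

/-- The down operator `D`. -/
def Down (f : P → ℝ) : P → ℝ := W.downMat.mulVec f

/-- `chSum x y = Σ_{c ∈ Ch(y→x)} p(c)`, the total `p`-weight of maximal chains
from `x` up to `y` (the entry of the corresponding power of the transition
matrix). -/
def chSum (x y : P) : ℝ := (W.upMat ^ (W.rk y - W.rk x).toNat) y x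

/-- The induced weight function of the link `P_x`. -/
def mL (x y : P) : ℝ := W.m y / W.m x * W.chSum x y

/-- The induced transition probabilities of the link `P_x` :
`pL x z y = (p_x)_{z → y}`. -/
def pL (x z y : P) : ℝ := W.p z y * W.chSum x y / W.chSum x z

/-- The level set `P_x(j)` of the link of `x`. -/
def linkLvl (x : P) (j : ℤ) : Finset P :=
  univ.filter (fun y => x ≤ y ∧ W.rk y = W.rk x + 1 + j)

/-- The inner product of the link `P_x` at link-level `j`. -/
def innerL (x : P) (j : ℤ) (f g : P → ℝ) : ℝ :=
  ∑ y ∈ W.linkLvl x j, W.mL x y * f y * g y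

/-- The matrix of the up operator of the link `P_x`. -/
def upMatL (x : P) : Matrix P P ℝ :=
  Matrix.of fun z y => if y ⋖ z ∧ x ≤ y then W.pL x z y else 0

/-- The matrix of the down operator of the link `P_x`. -/
def downMatL (x : P) : Matrix P P ℝ :=
  Matrix.of fun y z => if y ⋖ z then W.pL x z y * W.mL x z / W.mL x y else 0

/-- The up operator of the link `P_x`. -/
def UpL (x : P) (f : P → ℝ) : P → ℝ := (W.upMatL x).mulVec f

/-- The down operator of the link `P_x`. -/
def DownL (x : P) (f : P → ℝ) : P → ℝ := (W.downMatL x).mulVec f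

/-- The up-down walk `M^+_{x,0}` of the link `P_x`. -/
def MplusL (x : P) (f : P → ℝ) : P → ℝ := W.DownL x (W.UpL x f)

/-- The down-up walk `M^-_{x,0}` of the link `P_x`. -/
def MminusL (x : P) (f : P → ℝ) : P → ℝ := W.UpL x (W.DownL x f)

/-- The adjacency matrix. -/
def adjMat : Matrix P P ℝ := Matrix.of fun y x =>
  if x = y then 0 else
    ∑ z ∈ univ.filter (fun z => x ⋖ z ∧ y ⋖ z),
      W.m z * W.p z x * W.p z y / ((1 - W.p z y) * W.m y)

/-- The adjacency operator. -/
def Adj (f : P → ℝ) : P → ℝ := W.adjMat.mulVec f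

/-- The adjacency matrix of the link `P_x`. -/
def adjMatL (x : P) : Matrix P P ℝ := Matrix.of fun y w =>
  if w = y then 0 else
    ∑ z ∈ univ.filter (fun z => w ⋖ z ∧ y ⋖ z),
      W.mL x z * W.pL x z w * W.pL x z y / ((1 - W.pL x z y) * W.mL x y)

/-- The adjacency operator of the link `P_x`. -/
def AdjL (x : P) (f : P → ℝ) : P → ℝ := (W.adjMatL x).mulVec f

/-- The up-down walk `M^+_l` as an endomorphism of `C^l`. -/
def MplusEnd (l : ℤ) : Module.End ℝ ({x : P // W.rk x = l} → ℝ) :=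
  ((W.downMat * W.upMat).submatrix Subtype.val Subtype.val).mulVecLin

/-- The up-down walk `M^+_{x,0}` as an endomorphism of `C^0(P_x)`. -/
def MplusEndL (x : P) : Module.End ℝ ({y : P // x ⋖ y} → ℝ) :=
  ((W.downMatL x * W.upMatL x).submatrix Subtype.val Subtype.val).mulVecLin

/-- The adjacency operator `A_x` of the link `P_x` as an endomorphism of
`C^0(P_x)`. -/
def AdjEndL (x : P) : Module.End ℝ ({y : P // x ⋖ y} → ℝ) :=
  ((W.adjMatL x).submatrix Subtype.val Subtype.val).mulVecLin

/-- A standard weight scheme. -/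
def Standard : Prop :=
  ∀ y x : P, x ⋖ y → W.p y x = 1 / ((univ.filter (fun z => z ⋖ y)).card : ℝ)

/-- `P` is lower regular at level `i` with constant `N`. -/
def LowerRegAt (i : ℤ) (N : ℕ) : Prop :=
  ∀ y : P, W.rk y = i → (univ.filter (fun z => z ⋖ y)).card = N

/-- `P` is middle regular at level `i` with constant `N`. -/
def MiddleRegAt (i : ℤ) (N : ℕ) : Prop :=
  ∀ x z : P, W.rk x = i + 1 → W.rk z = i - 1 → z < x →
    (univ.filter (fun y => z ⋖ y ∧ y ⋖ x)).card = N

/-- `P` is `∨∧`-regular at level `i` with constant `N`. -/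
def WedgeRegAt (i : ℤ) (N : ℕ) : Prop :=
  ∀ y₁ y₂ : P, W.rk y₁ = i → W.rk y₂ = i → y₁ ≠ y₂ → (∃ z, y₁ ⋖ z ∧ y₂ ⋖ z) →
    (univ.filter (fun s => s ⋖ y₁ ∧ s ⋖ y₂)).card = N

/-- `P` is `⅄`-regular with constant `R`. -/
def WyeReg (R : ℕ) : Prop :=
  ∀ u y₁ y₂ : P, W.rk u = 2 → W.rk y₁ = 0 → W.rk y₂ = 0 → y₁ ≠ y₂ →
    y₁ < u → y₂ < u →
    (univ.filter (fun z => y₁ ⋖ z ∧ y₂ ⋖ z ∧ z ⋖ u)).card = R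

/-- Property UL.1 with constants `c`. -/
def UL1 (c : ℤ → ℝ) : Prop :=
  ∀ l : ℤ, 0 ≤ l → l < W.d → ∀ y : P, W.rk y = l → ∀ x : P, y ⋖ x →
    ∑ z ∈ univ.filter (fun z => z ⋖ y), W.p y z ^ 2 / W.chSum z x = c l

/-- Property UL.2 with constants `c`. -/
def UL2 (c : ℤ → ℝ) : Prop :=
  ∀ l : ℤ, 0 ≤ l → l < W.d → ∀ y₁ y₂ : P, W.rk y₁ = l → W.rk y₂ = l → y₁ ≠ y₂ →
    ∀ x : P, y₁ ⋖ x → y₂ ⋖ x →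
    ∑ z ∈ univ.filter (fun z => z ⋖ y₁ ∧ z ⋖ y₂),
      W.p y₁ z * W.p y₂ z / W.chSum z x = c l

/-- Property UL.3 with constants `c`. -/
def UL3 (c : ℤ → ℝ) : Prop :=
  ∀ l : ℤ, 0 ≤ l → l < W.d → ∀ y : P, W.rk y = l →
    ∑ x ∈ univ.filter (fun x => y ⋖ x), W.m x * W.p x y ^ 2 = c l * W.m y

/-- Property AL. -/
def AL : Prop :=
  ∀ l : ℤ, 0 ≤ l → l ≤ W.d - 1 → ∀ x y : P, W.rk x = l → W.rk y = l → x ≠ y →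
    ∑ z ∈ univ.filter (fun z => x ⋖ z ∧ y ⋖ z),
        W.m z * W.p z x * W.p z y / (1 - W.p z x)
    = ∑ z ∈ univ.filter (fun z => x ⋖ z ∧ y ⋖ z),
        W.m z * W.p z x * W.p z y *
          ∑ s ∈ univ.filter (fun s => s ⋖ x ∧ s ⋖ y),
            W.p x s * W.p y s / (W.chSum s z - W.p z x * W.p x s)

/-- Equation TL.1 with constant `c`. -/
def TL1 (c : ℝ) : Prop :=
  ∀ y : P, W.rk y = 0 →
    c * W.m y = ∑ z ∈ univ.filter (fun z => y ⋖ z), W.m z * W.p z y ^ 2 *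
      ∑ x ∈ univ.filter (fun x => x ⋖ z ∧ x ≠ y), W.p z x / (1 - W.p z x) ^ 2

/-- Equation TL.2 with constant `c`. -/
def TL2 (c : ℝ) : Prop :=
  ∀ y₁ y₂ : P, W.rk y₁ = 0 → W.rk y₂ = 0 → y₁ ≠ y₂ →
    c * ∑ z ∈ univ.filter (fun z => y₁ ⋖ z ∧ y₂ ⋖ z),
          W.m z * W.p z y₁ * W.p z y₂ / (1 - W.p z y₁)
    = ∑ z ∈ univ.filter (fun z => y₁ ⋖ z ∧ y₂ ⋖ z),
        W.m z * W.p z y₁ * W.p z y₂ *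
          ∑ x ∈ univ.filter (fun x => x ⋖ z ∧ x ≠ y₁ ∧ x ≠ y₂),
            W.p z x / (1 - W.p z x) ^ 2

/-- Equation TL.3 with constant `c`. -/
def TL3 (c : ℝ) : Prop :=
  ∀ y : P, W.rk y = 0 →
    c * W.m y =
      ∑ x ∈ univ.filter (fun x => W.rk x = 0 ∧ x ≠ y),
        ∑ z ∈ univ.filter (fun z => x ⋖ z ∧ y ⋖ z),
          ∑ w ∈ univ.filter (fun w => w ≠ z ∧ x ⋖ w ∧ y ⋖ w),
            ∑ u ∈ univ.filter (fun u => z ⋖ u ∧ w ⋖ u),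
              W.m u * W.p u z * W.p u w * W.p w y * W.p z y * W.p w x * W.p z x /
                (W.chSum x u * (1 - W.p u z * W.p z x / W.chSum x u) *
                  (1 - W.p w x) * (1 - W.p z x))

/-- Equation TL.4 with constant `c`. -/
def TL4 (c : ℝ) : Prop :=
  ∀ y₁ y₂ : P, W.rk y₁ = 0 → W.rk y₂ = 0 → y₁ ≠ y₂ →
    c * ∑ z ∈ univ.filter (fun z => y₁ ⋖ z ∧ y₂ ⋖ z),
          W.m z * W.p z y₁ * W.p z y₂ / (1 - W.p z y₁)
    = ∑ x ∈ univ.filter (fun x => W.rk x = 0 ∧ x ≠ y₁ ∧ x ≠ y₂),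
        ∑ z ∈ univ.filter (fun z => x ⋖ z ∧ y₂ ⋖ z),
          ∑ w ∈ univ.filter (fun w => w ≠ z ∧ x ⋖ w ∧ y₁ ⋖ w),
            ∑ u ∈ univ.filter (fun u => z ⋖ u ∧ w ⋖ u),
              W.m u * W.p u z * W.p u w * W.p w y₁ * W.p z y₂ * W.p w x * W.p z x /
                (W.chSum x u * (1 - W.p u z * W.p z x / W.chSum x u) *
                  (1 - W.p w x) * (1 - W.p z x))

/-- The induced function `f̂_x ∈ C^0(P_x)` of `f ∈ C^0`. -/
def hatF (x : P) (f : P → ℝ) : P → ℝ := fun z =>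
  (1 / (1 - W.p z x)) * ∑ y ∈ univ.filter (fun y => y ≠ x ∧ y ⋖ z), W.p z y * f y

/-- `P` is connected: the Markov chain `M^+_0` on `P(0)` is irreducible. -/
def Connected : Prop :=
  ∀ y z : P, W.rk y = 0 → W.rk z = 0 →
    ∃ j : ℕ, 0 < j ∧ ((W.downMat * W.upMat) ^ j) z y ≠ 0

/-- The link `P_x` is connected: the Markov chain `M^+_{x,0}` on `P_x(0)` is
irreducible. -/
def LinkConnected (x : P) : Prop :=
  ∀ y z : P, x ⋖ y → x ⋖ z →
    ∃ j : ℕ, 0 < j ∧ ((W.downMatL x * W.upMatL x) ^ j) z y ≠ 0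

/-- `c` is a nontrivial eigenvalue of the adjacency operator `A` of `P`,
i.e. one with an eigenvector orthogonal to the constants. -/
def IsNontrivEigAdj (c : ℝ) : Prop :=
  ∃ f : P → ℝ, (∃ y, W.rk y = 0 ∧ f y ≠ 0) ∧
    (∀ y, W.rk y = 0 → W.Adj f y = c * f y) ∧
    W.innerAt 0 f (fun _ => 1) = 0

/-- `c` is a nontrivial eigenvalue of the adjacency operator `A_x` of the
link `P_x`. -/
def IsNontrivEigAdjL (x : P) (c : ℝ) : Prop :=
  ∃ f : P → ℝ, (∃ y, x ⋖ y ∧ f y ≠ 0) ∧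
    (∀ y, x ⋖ y → W.AdjL x f y = c * f y) ∧
    W.innerL x 0 f (fun _ => 1) = 0

end WGP

/-!
The transition probabilities define a random walk descending the poset one rank at a time. Started
at `y`, it reaches `P(k)` with probability one, at `x` with probability `Σ_{c ∈ Ch(y→x)} p(c)`.
By definition of the link, this probability times `m(y)` is `m(x) m_x(y)`, so the localization
formula is the decomposition of the mass `m(y)` according to where the walk from `y` meets `P(k)`.
-/

namespace WGP

variable {P : Type} [Fintype P] [PartialOrder P] (W : WGP P)

theorem mem_lvl {i : ℤ} {x : P} : x ∈ W.lvl i ↔ W.rk x = i := by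
  simp [lvl]

theorem mem_linkLvl {x y : P} {j : ℤ} :
    y ∈ W.linkLvl x j ↔ x ≤ y ∧ W.rk y = W.rk x + 1 + j := by
  simp [linkLvl]

theorem covBy_of_p_ne_zero {x y : P} (h : W.p y x ≠ 0) : x ⋖ y :=
  (W.p_pos_iff y x).1 ((W.p_nonneg y x).lt_of_ne' h)

theorem sum_p_eq_one {y : P} (hy : 0 ≤ W.rk y) : ∑ x, W.p y x = 1 := by
  rw [← W.p_sum y hy]
  refine (sum_filter_of_ne fun x _ hx => ?_).symm
  exact W.covBy_of_p_ne_zero hx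

theorem exists_covBy_of_upMat_pow_succ_ne_zero {n : ℕ} {x y : P}
    (h : (W.upMat ^ (n + 1)) y x ≠ 0) : ∃ z, z ⋖ y ∧ (W.upMat ^ n) z x ≠ 0 := by
  rw [pow_succ', Matrix.mul_apply] at h
  obtain ⟨z, -, hz⟩ := exists_ne_zero_of_sum_ne_zero h
  exact ⟨z, W.covBy_of_p_ne_zero (left_ne_zero_of_mul hz), right_ne_zero_of_mul hz⟩

theorem le_of_upMat_pow_ne_zero {n : ℕ} {x y : P} (h : (W.upMat ^ n) y x ≠ 0) : x ≤ y := by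
  induction n generalizing y with
  | zero => exact (not_imp_comm.1 Matrix.one_apply_ne (by rwa [pow_zero] at h)).ge
  | succ n ih =>
    obtain ⟨z, hzy, hz⟩ := W.exists_covBy_of_upMat_pow_succ_ne_zero h
    exact (ih hz).trans hzy.le

theorem rk_eq_of_upMat_pow_ne_zero {n : ℕ} {x y : P} (h : (W.upMat ^ n) y x ≠ 0) :
    W.rk y = W.rk x + n := by
  induction n generalizing y with
  | zero =>
    obtain rfl : y = x := not_imp_comm.1 Matrix.one_apply_ne (by rwa [pow_zero] at h)
    simp
  | succ n ih =>
    obtain ⟨z, hzy, hz⟩ := W.exists_covBy_of_upMat_pow_succ_ne_zero h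
    have hrk_z := ih hz
    have hrk_y := W.rk_covBy z y hzy
    omega

theorem sum_upMat_pow_eq_one {n : ℕ} {y : P} (hn : (n : ℤ) ≤ W.rk y + 1) :
    ∑ x, (W.upMat ^ n) y x = 1 := by
  induction n generalizing y with
  | zero => simp [Matrix.one_apply]
  | succ n ih =>
    have hstep : ∀ z, W.p y z * ∑ x, (W.upMat ^ n) z x = W.p y z := by
      intro z
      rcases eq_or_ne (W.p y z) 0 with hz | hz
      · rw [hz, zero_mul]
      · have hrk := W.rk_covBy z y (W.covBy_of_p_ne_zero hz)
        rw [ih (by omega), mul_one]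
    calc ∑ x, (W.upMat ^ (n + 1)) y x
        = ∑ x, ∑ z, W.p y z * (W.upMat ^ n) z x := by
          simp only [pow_succ', Matrix.mul_apply, upMat, Matrix.of_apply]
      _ = ∑ z, W.p y z * ∑ x, (W.upMat ^ n) z x := by
          rw [sum_comm]
          simp only [mul_sum]
      _ = ∑ z, W.p y z := sum_congr rfl fun z _ => hstep z
      _ = 1 := W.sum_p_eq_one (by omega)

theorem le_of_chSum_ne_zero {x y : P} (h : W.chSum x y ≠ 0) : x ≤ y :=
  W.le_of_upMat_pow_ne_zero h

theorem sum_lvl_chSum {k : ℤ} {y : P} (hk : -1 ≤ k) (hky : k ≤ W.rk y) :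
    ∑ x ∈ W.lvl k, W.chSum x y = 1 := by
  have hsupp : ∀ x, (W.upMat ^ (W.rk y - k).toNat) y x ≠ 0 → x ∈ W.lvl k := by
    intro x hx
    have hrk := W.rk_eq_of_upMat_pow_ne_zero hx
    rw [mem_lvl]
    omega
  calc ∑ x ∈ W.lvl k, W.chSum x y
      = ∑ x ∈ W.lvl k, (W.upMat ^ (W.rk y - k).toNat) y x :=
        sum_congr rfl fun x hx => by rw [chSum, W.mem_lvl.1 hx]
    _ = ∑ x, (W.upMat ^ (W.rk y - k).toNat) y x :=
        sum_subset (subset_univ _) fun x _ hx => not_imp_comm.1 (hsupp x) hx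
    _ = 1 := W.sum_upMat_pow_eq_one (by omega)

theorem m_mul_mL (x y : P) : W.m x * W.mL x y = W.chSum x y * W.m y := by
  have hm := (W.m_pos x).ne'
  rw [mL]
  field_simp

theorem m_mul_innerL (x : P) (j : ℤ) (f g : P → ℝ) :
    W.m x * W.innerL x j f g =
      ∑ y ∈ W.lvl (W.rk x + 1 + j), W.chSum x y * (W.m y * f y * g y) := by
  have hsub : W.linkLvl x j ⊆ W.lvl (W.rk x + 1 + j) := fun y hy =>
    W.mem_lvl.2 (W.mem_linkLvl.1 hy).2
  calc W.m x * W.innerL x j f g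
      = ∑ y ∈ W.linkLvl x j, W.chSum x y * (W.m y * f y * g y) := by
        simp only [innerL, mul_sum, ← mul_assoc, m_mul_mL]
    _ = ∑ y ∈ W.lvl (W.rk x + 1 + j), W.chSum x y * (W.m y * f y * g y) := by
        refine sum_subset hsub fun y hy hy' => ?_
        have hxy : ¬ x ≤ y := fun hle => hy' (W.mem_linkLvl.2 ⟨hle, W.mem_lvl.1 hy⟩)
        rw [not_imp_comm.1 W.le_of_chSum_ne_zero hxy, zero_mul]

end WGP

/-- the basic localization property for inner products. -/
theorem stmt0 {P : Type} [Fintype P] [PartialOrder P] (W : WGP P)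
    (k l : ℤ) (hk : -1 ≤ k) (hkl : k < l) (hl : l ≤ W.d) (f g : P → ℝ) :
    W.innerAt l f g = ∑ x ∈ W.lvl k, W.m x * W.innerL x (l - k - 1) f g := by
  symm
  calc ∑ x ∈ W.lvl k, W.m x * W.innerL x (l - k - 1) f g
      = ∑ x ∈ W.lvl k, ∑ y ∈ W.lvl l, W.chSum x y * (W.m y * f y * g y) :=
        sum_congr rfl fun x hx => by
          rw [W.m_mul_innerL, W.mem_lvl.1 hx, show k + 1 + (l - k - 1) = l by ring]
    _ = ∑ y ∈ W.lvl l, (∑ x ∈ W.lvl k, W.chSum x y) * (W.m y * f y * g y) := by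
        rw [sum_comm]
        simp only [sum_mul]
    _ = ∑ y ∈ W.lvl l, W.m y * f y * g y :=
        sum_congr rfl fun y hy => by
          rw [W.sum_lvl_chSum hk (hkl.le.trans_eq (W.mem_lvl.1 hy).symm), one_mul]
    _ = W.innerAt l f g := rfl
end
end

section
/- Let P be a finite pure weighted graded poset of rank d with a standard weight scheme. If P is lower regular at every level with constants (N^low_i) and middle regular at every level with constants (N^mid_i), then P satisfies UL.1 and UL.3 with constants c^xyz_i = N^low_{i+1}/N^mid_i and c^sqr_i = 1/N^low_{i+1}. If in addition P is ∨∧-regular at every level with constants (N^∨∧_i), then P also satisfies UL.2 with constants c^dia_i = N^∨∧_i·N^low_{i+1}/(N^low_i·N^mid_i). -/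
open Finset

attribute [local instance] Classical.propDecidable

noncomputable section

/-! Lower regularity makes `p` constant on each level, so all chains from `x` down to a fixed `z`
two levels below carry the same weight, and middle regularity counts them: `p(y → z) / chSum z x`
is `N^low_{l+1} / N^mid_l` for every `z ⋖ y ⋖ x` with `y` of rank `l`. Splitting this constant off
each summand reduces UL.1 to `∑ z, p(y → z) = 1` and UL.2 to counting the common lower covers. For
UL.3, one factor `p(x → y) = 1 / N^low_{l+1}` comes out of the recursion defining `m y`. -/

namespace WGP

variable {P : Type} [Fintype P] [PartialOrder P] {W : WGP P} {x y y₁ y₂ z : P} {l : ℤ}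
  {L L' M N : ℕ}

theorem p_eq_zero_of_not_covBy (h : ¬ x ⋖ y) : W.p y x = 0 :=
  le_antisymm (not_lt.1 (mt (W.p_pos_iff y x).1 h)) (W.p_nonneg y x)

theorem chSum_eq_sum_of_rk_eq_add_two (h : W.rk x = W.rk z + 2) :
    W.chSum z x = ∑ y with z ⋖ y ∧ y ⋖ x, W.p x y * W.p y z := by
  have hlen : (W.rk x - W.rk z).toNat = 2 := by lia
  simp only [chSum, hlen, pow_two, Matrix.mul_apply, upMat, Matrix.of_apply]
  refine (sum_filter_of_ne fun y _ hy => ?_).symm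
  exact ⟨not_imp_comm.1 p_eq_zero_of_not_covBy (right_ne_zero_of_mul hy),
    not_imp_comm.1 p_eq_zero_of_not_covBy (left_ne_zero_of_mul hy)⟩

namespace Standard

theorem p_eq_one_div (hW : W.Standard) (hlow : W.LowerRegAt l L) (hy : W.rk y = l)
    (hxy : x ⋖ y) : W.p y x = 1 / L := by
  rw [hW y x hxy, hlow y hy]

theorem chSum_eq (hW : W.Standard) (hlow : W.LowerRegAt l L) (hlow' : W.LowerRegAt (l + 1) L')
    (hmid : W.MiddleRegAt l M) (hx : W.rk x = l + 1) (hz : W.rk z = l - 1) (hzx : z < x) :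
    W.chSum z x = M * (1 / L' * (1 / L)) := by
  have hchain : ∀ y ∈ univ.filter (fun y => z ⋖ y ∧ y ⋖ x),
      W.p x y * W.p y z = 1 / L' * (1 / L) := by
    intro y hy
    obtain ⟨hzy, hyx⟩ := (mem_filter.1 hy).2
    have hyl : W.rk y = l := by have := W.rk_covBy z y hzy; lia
    rw [hW.p_eq_one_div hlow' hx hyx, hW.p_eq_one_div hlow hyl hzy]
  rw [chSum_eq_sum_of_rk_eq_add_two (by lia), sum_congr rfl hchain, sum_const,
    hmid x z hx hz hzx, nsmul_eq_mul]

theorem p_div_chSum (hW : W.Standard) (hlow : W.LowerRegAt l L)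
    (hlow' : W.LowerRegAt (l + 1) L') (hmid : W.MiddleRegAt l M) (hy : W.rk y = l)
    (hzy : z ⋖ y) (hyx : y ⋖ x) : W.p y z / W.chSum z x = L' / M := by
  have hx : W.rk x = l + 1 := by rw [W.rk_covBy y x hyx, hy]
  have hz : W.rk z = l - 1 := by have := W.rk_covBy z y hzy; lia
  have hp : W.p y z = 1 / L := hW.p_eq_one_div hlow hy hzy
  have hL : (L : ℝ) ≠ 0 := (one_div_pos.1 (hp ▸ (W.p_pos_iff y z).2 hzy)).ne'
  rw [hW.chSum_eq hlow hlow' hmid hx hz (hzy.lt.trans hyx.lt), hp]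
  field_simp

theorem sum_p_sq_div_chSum (hW : W.Standard) (hlow : W.LowerRegAt l L)
    (hlow' : W.LowerRegAt (l + 1) L') (hmid : W.MiddleRegAt l M) (hl : 0 ≤ l)
    (hy : W.rk y = l) (hyx : y ⋖ x) :
    ∑ z with z ⋖ y, W.p y z ^ 2 / W.chSum z x = L' / M := calc
  _ = ∑ z with z ⋖ y, W.p y z * (L' / M) := sum_congr rfl fun z hz => by
    rw [pow_two, mul_div_assoc, hW.p_div_chSum hlow hlow' hmid hy (mem_filter.1 hz).2 hyx]
  _ = L' / M := by rw [← sum_mul, W.p_sum y (hl.trans_eq hy.symm), one_mul]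

theorem sum_p_mul_p_div_chSum (hW : W.Standard) (hlow : W.LowerRegAt l L)
    (hlow' : W.LowerRegAt (l + 1) L') (hmid : W.MiddleRegAt l M) (hwedge : W.WedgeRegAt l N)
    (hy₁ : W.rk y₁ = l) (hy₂ : W.rk y₂ = l) (hne : y₁ ≠ y₂) (h₁ : y₁ ⋖ x) (h₂ : y₂ ⋖ x) :
    ∑ z with z ⋖ y₁ ∧ z ⋖ y₂, W.p y₁ z * W.p y₂ z / W.chSum z x = N * L' / (L * M) := calc
  _ = ∑ z with z ⋖ y₁ ∧ z ⋖ y₂, (1 / L * (L' / M) : ℝ) := sum_congr rfl fun z hz => by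
    obtain ⟨hz₁, hz₂⟩ := (mem_filter.1 hz).2
    rw [mul_div_assoc, hW.p_eq_one_div hlow hy₁ hz₁,
      hW.p_div_chSum hlow hlow' hmid hy₂ hz₂ h₂]
  _ = N * (1 / L * (L' / M)) := by
    rw [sum_const, hwedge y₁ y₂ hy₁ hy₂ hne ⟨x, h₁, h₂⟩, nsmul_eq_mul]
  _ = N * L' / (L * M) := by ring

theorem sum_m_mul_p_sq (hW : W.Standard) (hlow' : W.LowerRegAt (l + 1) L') (hl : l < W.d)
    (hy : W.rk y = l) : ∑ x with y ⋖ x, W.m x * W.p x y ^ 2 = 1 / L' * W.m y := by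
  rw [W.m_eq y (hy.trans_lt hl), mul_sum]
  refine sum_congr rfl fun x hx => ?_
  have hyx : y ⋖ x := (mem_filter.1 hx).2
  have hp : W.p x y = 1 / L' := hW.p_eq_one_div hlow' (by rw [W.rk_covBy y x hyx, hy]) hyx
  rw [hp]
  ring

end Standard

end WGP

/-- standard regular posets satisfy Property UL with the stated
constants. -/
theorem stmt3 {P : Type} [Fintype P] [PartialOrder P] (W : WGP P)
    (Nlow Nmid : ℤ → ℕ)
    (hstd : W.Standard)
    (hlow : ∀ i : ℤ, 0 ≤ i → i ≤ W.d → W.LowerRegAt i (Nlow i))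
    (hmid : ∀ i : ℤ, 0 ≤ i → i + 1 ≤ W.d → W.MiddleRegAt i (Nmid i)) :
    (W.UL1 (fun i => (Nlow (i + 1) : ℝ) / (Nmid i : ℝ)) ∧
      W.UL3 (fun i => 1 / (Nlow (i + 1) : ℝ))) ∧
    ∀ Nwedge : ℤ → ℕ,
      (∀ i : ℤ, 0 ≤ i → i ≤ W.d → W.WedgeRegAt i (Nwedge i)) →
      W.UL2 (fun i => (Nwedge i : ℝ) * (Nlow (i + 1) : ℝ) /
        ((Nlow i : ℝ) * (Nmid i : ℝ))) := by
  refine ⟨⟨fun l h0 hd y hy x hyx => ?_, fun l h0 hd y hy => ?_⟩,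
    fun Nwedge hwedge l h0 hd y₁ y₂ hy₁ hy₂ hne x h₁ h₂ => ?_⟩
  · exact hstd.sum_p_sq_div_chSum (hlow l h0 hd.le) (hlow (l + 1) (by lia) hd) (hmid l h0 hd)
      h0 hy hyx
  · exact hstd.sum_m_mul_p_sq (hlow (l + 1) (by lia) hd) hd hy
  · exact hstd.sum_p_mul_p_div_chSum (hlow l h0 hd.le) (hlow (l + 1) (by lia) hd) (hmid l h0 hd)
      (hwedge l h0 hd.le) hy₁ hy₂ hne h₁ h₂
end
end
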